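/- Let G = (V,E) be a finite simple non-complete graph of order n whose set D_G of dominant vertices (vertices of degree n−1) is nonempty, and let S = V ∖ D_G. Then G satisfies (k,1)-adjacency anonymity with k = min{δ(G), |S| − Δ(⟨S⟩_G) − 1}, where δ(G) is the minimum degree of G, ⟨S⟩_G is the subgraph of G induced by S, and Δ(⟨S⟩_G) is its maximum degree. -/

import Mathlib

open Finset

variable {V : Type*}

/-- The adjacency function: 0 if equal, 1 if adjacent, 2 otherwise. -/
def adjFn [DecidableEq V] (G : SimpleGraph V) [DecidableRel G.Adj] (u v : V) : ℕ :=
  if u = v then 0 else if G.Adj u v then 1 else 2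

/-- The equivalence class of `x` outside `S` under equality of adjacency
representations with respect to `S`. -/
def adjClass [DecidableEq V] (G : SimpleGraph V) [DecidableRel G.Adj] (S : Set V) (x : V) :
    Set V :=
  {y | y ∉ S ∧ ∀ s ∈ S, adjFn G s x = adjFn G s y}

/-- `S` is a `k`-adjacency antiresolving set of `G`: `S` is a proper nonempty subset of the
vertex set and `k` is the minimum cardinality of an equivalence class of the relation
"having equal adjacency representation with respect to `S`" on the complement of `S`. -/
def IsAdjAntiresolvingSet [DecidableEq V] (G : SimpleGraph V) [DecidableRel G.Adj]
    (S : Set V) (k : ℕ) : Prop :=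
  S.Nonempty ∧ S ≠ Set.univ ∧ 0 < k ∧
    (∀ x ∉ S, k ≤ (adjClass G S x).ncard) ∧
    (∃ x ∉ S, (adjClass G S x).ncard = k)

/-- `G` satisfies `(k,ℓ)`-adjacency anonymity: `k` is the smallest positive integer such that
the `k`-adjacency antidimension of `G` (minimum cardinality of a `k`-adjacency antiresolving
set) is at most `ℓ`. -/
def AdjAnonymous [DecidableEq V] (G : SimpleGraph V) [DecidableRel G.Adj] (k ℓ : ℕ) : Prop :=
  0 < k ∧ (∃ S : Set V, IsAdjAntiresolvingSet G S k ∧ S.ncard ≤ ℓ) ∧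
    ∀ k' : ℕ, 0 < k' → (∃ S : Set V, IsAdjAntiresolvingSet G S k' ∧ S.ncard ≤ ℓ) → k ≤ k'

/-!
With respect to a single vertex `v`, the other vertices fall into at most two classes: the
neighbours of `v` in `G` and its neighbours in the complement `Gᶜ`. So, as long as `v` is neither
isolated nor universal, `{v}` is `k`-antiresolving for `k` the minimum of `deg_G v` and
`deg_{Gᶜ} v`, and a universal `v` only contributes `deg_G v`. Minimising over `v` gives the minimum
of `δ(G)` and the least `Gᶜ`-degree of a non-universal vertex. All `Gᶜ`-neighbours of a vertex of
`S` lie in `S`, so this last degree is `|S| - Δ(⟨S⟩_G) - 1`.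
-/

theorem adj_or_compl_adj_of_ne (G : SimpleGraph V) {v w : V} (h : v ≠ w) :
    G.Adj v w ∨ Gᶜ.Adj v w := by
  rw [SimpleGraph.compl_adj]
  tauto

section Singleton

variable [DecidableEq V] {G : SimpleGraph V} [DecidableRel G.Adj] {v x : V} {k : ℕ}

theorem adjClass_singleton_of_adj (h : G.Adj v x) : adjClass G {v} x = G.neighborSet v := by
  ext y
  simp only [adjClass, adjFn, Set.mem_ofPred_eq, Set.mem_singleton_iff, forall_eq,
    SimpleGraph.mem_neighborSet]
  grind [h.ne, SimpleGraph.Adj.ne]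

theorem adjClass_singleton_of_compl_adj (h : Gᶜ.Adj v x) :
    adjClass G {v} x = Gᶜ.neighborSet v := by
  ext y
  simp only [adjClass, adjFn, Set.mem_ofPred_eq, Set.mem_singleton_iff, forall_eq,
    SimpleGraph.mem_neighborSet, SimpleGraph.compl_adj] at h ⊢
  grind

theorem ncard_adjClass_singleton_of_adj [Fintype (G.neighborSet v)] (h : G.Adj v x) :
    (adjClass G {v} x).ncard = G.degree v := by
  rw [adjClass_singleton_of_adj h, Set.ncard_eq_toFinset_card', Set.toFinset_card,
    SimpleGraph.card_neighborSet_eq_degree]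

theorem ncard_adjClass_singleton_of_compl_adj [Fintype (Gᶜ.neighborSet v)] (h : Gᶜ.Adj v x) :
    (adjClass G {v} x).ncard = Gᶜ.degree v := by
  rw [adjClass_singleton_of_compl_adj h, Set.ncard_eq_toFinset_card', Set.toFinset_card,
    SimpleGraph.card_neighborSet_eq_degree]

theorem IsAdjAntiresolvingSet.pos {S : Set V} (h : IsAdjAntiresolvingSet G S k) : 0 < k :=
  h.2.2.1

variable [Fintype (G.neighborSet v)] [Fintype (Gᶜ.neighborSet v)]

theorem IsAdjAntiresolvingSet.eq_degree_or_eq_degree_compl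
    (h : IsAdjAntiresolvingSet G {v} k) : k = G.degree v ∨ k = Gᶜ.degree v := by
  obtain ⟨-, -, -, -, x, hx, rfl⟩ := h
  exact (adj_or_compl_adj_of_ne G (Ne.symm hx)).imp ncard_adjClass_singleton_of_adj
    ncard_adjClass_singleton_of_compl_adj

theorem isAdjAntiresolvingSet_singleton (hv : 0 < G.degree v) (hv' : 0 < Gᶜ.degree v) :
    IsAdjAntiresolvingSet G {v} (min (G.degree v) (Gᶜ.degree v)) := by
  obtain ⟨x, hx⟩ := (G.degree_pos_iff_exists_adj v).mp hv
  obtain ⟨y, hy⟩ := (Gᶜ.degree_pos_iff_exists_adj v).mp hv'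
  refine ⟨Set.singleton_nonempty v, Set.ne_univ_iff_exists_notMem _ |>.mpr ⟨x, hx.ne'⟩,
    lt_min hv hv', fun z hz ↦ ?_, ?_⟩
  · obtain hz | hz := adj_or_compl_adj_of_ne G (Ne.symm hz)
    · exact (min_le_left _ _).trans_eq (ncard_adjClass_singleton_of_adj hz).symm
    · exact (min_le_right _ _).trans_eq (ncard_adjClass_singleton_of_compl_adj hz).symm
  · obtain h | h := min_choice (G.degree v) (Gᶜ.degree v)
    · exact ⟨x, hx.ne', by rw [h, ncard_adjClass_singleton_of_adj hx]⟩
    · exact ⟨y, hy.ne', by rw [h, ncard_adjClass_singleton_of_compl_adj hy]⟩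

end Singleton

theorem adjAnonymous_one_iff [Finite V] [DecidableEq V] {G : SimpleGraph V} [DecidableRel G.Adj]
    {k : ℕ} : AdjAnonymous G k 1 ↔ IsLeast {j | ∃ v, IsAdjAntiresolvingSet G {v} j} k := by
  have exists_iff (j : ℕ) : (∃ T : Set V, IsAdjAntiresolvingSet G T j ∧ T.ncard ≤ 1) ↔
      ∃ v, IsAdjAntiresolvingSet G {v} j := by
    refine ⟨fun ⟨T, hT, hcard⟩ ↦ ?_, fun ⟨v, hv⟩ ↦ ⟨{v}, hv, (Set.ncard_singleton v).le⟩⟩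
    obtain ⟨v, rfl⟩ := Set.ncard_eq_one.mp (hcard.antisymm hT.1.ncard_pos)
    exact ⟨v, hT⟩
  simp only [AdjAnonymous, exists_iff]
  exact ⟨fun ⟨_, hk, hle⟩ ↦ ⟨hk, fun j ⟨v, hj⟩ ↦ hle j hj.pos ⟨v, hj⟩⟩,
    fun ⟨⟨v, hk⟩, hle⟩ ↦ ⟨hk.pos, ⟨v, hk⟩, fun _ _ hj ↦ hle hj⟩⟩

section Fintype

variable [Fintype V] {G : SimpleGraph V} [DecidableRel G.Adj]

theorem not_isUniversal_of_minDegree_eq_degree {v : V} (hG : G ≠ ⊤)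
    (hv : G.minDegree = G.degree v) : ¬ G.IsUniversal v := by
  refine fun hu ↦ hG (SimpleGraph.eq_top_iff_forall_isUniversal.mpr fun w ↦ ?_)
  have hle : Fintype.card V - 1 ≤ G.degree w :=
    ((G.degree_eq_card_sub_one v).mpr hu).symm.trans_le (hv ▸ G.minDegree_le_degree w)
  exact not_not.mp fun hw ↦ hle.not_gt ((G.degree_lt_card_sub_one w).mpr hw)

theorem minDegree_pos_of_isUniversal [Nontrivial V] {v : V} (hv : G.IsUniversal v) :
    0 < G.minDegree :=
  (SimpleGraph.Connected.of_isUniversal hv).preconnected.minDegree_pos_of_nontrivial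

variable [DecidableEq V]

theorem degree_compl_pos_iff {v : V} : 0 < Gᶜ.degree v ↔ ¬ G.IsUniversal v := by
  rw [SimpleGraph.degree_pos, SimpleGraph.isIsolated_compl_iff_isUniversal]

theorem neighborFinset_compl_subset_filter_not_isUniversal [DecidablePred G.IsUniversal] (v : V) :
    Gᶜ.neighborFinset v ⊆ univ.filter fun w ↦ ¬ G.IsUniversal w := by
  intro w hw
  rw [SimpleGraph.mem_neighborFinset] at hw
  rw [mem_filter_univ, ← degree_compl_pos_iff]
  exact hw.degree_pos_right

theorem degree_compl_add_card_filter_adj {S : Finset V} {v : V} (hv : v ∈ S)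
    (hS : Gᶜ.neighborFinset v ⊆ S) :
    Gᶜ.degree v + #(S.filter fun w ↦ G.Adj v w) + 1 = #S := by
  have hfilter : (S.filter fun w ↦ ¬ G.Adj v w) = insert v (Gᶜ.neighborFinset v) := by
    ext w
    have hwS := @hS w
    simp only [mem_filter, mem_insert, SimpleGraph.mem_neighborFinset,
      SimpleGraph.compl_adj] at hwS ⊢
    grind [G.irrefl (v := v)]
  rw [← card_filter_add_card_filter_not (s := S) (G.Adj v), hfilter,
    card_insert_of_notMem (Gᶜ.notMem_neighborFinset_self v),
    SimpleGraph.card_neighborFinset_eq_degree]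
  ring

theorem isLeast_image_degree_compl {S : Finset V} (hne : S.Nonempty)
    (hS : ∀ v ∈ S, Gᶜ.neighborFinset v ⊆ S) :
    IsLeast ((fun v ↦ Gᶜ.degree v) '' (S : Set V))
      (#S - S.sup (fun v ↦ #(S.filter fun w ↦ G.Adj v w)) - 1) := by
  have hdeg (v : V) (hv : v ∈ S) := degree_compl_add_card_filter_adj hv (hS v hv)
  constructor
  · obtain ⟨v, hv, hsup⟩ := S.exists_mem_eq_sup hne fun v ↦ #(S.filter fun w ↦ G.Adj v w)
    exact ⟨v, hv, by grind⟩
  · rintro _ ⟨v, hv, rfl⟩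
    have hsup := S.le_sup (f := fun v ↦ #(S.filter fun w ↦ G.Adj v w)) hv
    grind

theorem isLeast_isAdjAntiresolvingSet_singleton {c : ℕ} (hδ : 0 < G.minDegree)
    (hc : IsLeast ((fun v ↦ Gᶜ.degree v) '' {v | ¬ G.IsUniversal v}) c) :
    IsLeast {k | ∃ v, IsAdjAntiresolvingSet G {v} k} (min G.minDegree c) := by
  have antiresolving (v : V) (hv : ¬ G.IsUniversal v) :=
    isAdjAntiresolvingSet_singleton (hδ.trans_le (G.minDegree_le_degree v))
      (degree_compl_pos_iff.mpr hv)
  have codegree_ge (v : V) (hv : ¬ G.IsUniversal v) : c ≤ Gᶜ.degree v := hc.2 ⟨v, hv, rfl⟩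
  obtain ⟨w, hw, hwc⟩ := hc.1
  constructor
  · obtain h | h := le_total G.minDegree c
    · have : Nonempty V := ⟨w⟩
      obtain ⟨m, hm⟩ := G.exists_minimal_degree_vertex
      have hG : G ≠ ⊤ := fun h ↦ hw (h ▸ SimpleGraph.IsUniversal.top)
      have hmu := not_isUniversal_of_minDegree_eq_degree hG hm
      have hle : G.degree m ≤ Gᶜ.degree m := hm ▸ h.trans (codegree_ge m hmu)
      have hmin : min G.minDegree c = min (G.degree m) (Gᶜ.degree m) := by
        rw [min_eq_left h, min_eq_left hle, hm]
      exact ⟨m, hmin ▸ antiresolving m hmu⟩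
    · have hle : Gᶜ.degree w ≤ G.degree w := hwc.trans_le (h.trans (G.minDegree_le_degree w))
      have hmin : min G.minDegree c = min (G.degree w) (Gᶜ.degree w) := by
        rw [min_eq_right h, min_eq_right hle, ← hwc]
      exact ⟨w, hmin ▸ antiresolving w hw⟩
  · rintro k ⟨v, hk⟩
    obtain rfl | rfl := hk.eq_degree_or_eq_degree_compl
    · exact (min_le_left _ _).trans (G.minDegree_le_degree v)
    · exact (min_le_right _ _).trans (codegree_ge v (degree_compl_pos_iff.mp hk.pos))

end Fintype

theorem stmt2_general [Fintype V] [DecidableEq V] (G : SimpleGraph V) [DecidableRel G.Adj]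
    (hG : G ≠ ⊤) (hδ : 0 < G.minDegree) (S : Finset V)
    (hS : S = univ.filter fun v ↦ G.degree v ≠ Fintype.card V - 1) :
    AdjAnonymous G
      (min G.minDegree (#S - S.sup (fun v ↦ #(S.filter fun w ↦ G.Adj v w)) - 1)) 1 := by
  classical
  have hSu : S = univ.filter fun v ↦ ¬ G.IsUniversal v := by
    simp only [hS, ne_eq, SimpleGraph.degree_eq_card_sub_one]
  have hne : S.Nonempty := by
    rw [ne_eq, SimpleGraph.eq_top_iff_forall_isUniversal, not_forall] at hG
    simpa only [hSu, filter_nonempty_iff, mem_univ, true_and] using hG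
  have hc := isLeast_image_degree_compl hne fun v _ ↦
    hSu ▸ neighborFinset_compl_subset_filter_not_isUniversal v
  have hcoe : (S : Set V) = {v | ¬ G.IsUniversal v} := by rw [hSu, coe_filter_univ]
  exact adjAnonymous_one_iff.mpr (isLeast_isAdjAntiresolvingSet_singleton hδ (hcoe ▸ hc))

/-- a finite simple non-complete graph `G` of order `n` with a nonempty set of
dominant vertices satisfies `(k,1)`-adjacency anonymity with
`k = min {δ(G), |S| - Δ(⟨S⟩_G) - 1}`, where `S` is the set of non-dominant vertices. -/
theorem stmt2 [Fintype V] [DecidableEq V] [Nonempty V] (G : SimpleGraph V) [DecidableRel G.Adj]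
    (hnoncomplete : ∃ u v : V, u ≠ v ∧ ¬ G.Adj u v)
    (hdom : ∃ v : V, G.degree v = Fintype.card V - 1)
    (S : Finset V) (hS : S = Finset.univ.filter fun v => G.degree v ≠ Fintype.card V - 1) :
    AdjAnonymous G
      (min G.minDegree
        (S.card - S.sup (fun v => (S.filter fun w => G.Adj v w).card) - 1)) 1 := by
  have : Nontrivial V := ⟨hnoncomplete.imp fun _ ↦ .imp fun _ ↦ And.left⟩
  exact stmt2_general G (SimpleGraph.ne_top_iff_exists_not_adj.mpr hnoncomplete)
    (hdom.elim fun d hd ↦ minDegree_pos_of_isUniversal ((G.degree_eq_card_sub_one d).mp hd)) S hS
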